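/- Let b = e0 − 2iβ²·C·e1 (with C = FE − (i/4)(K − K^{-1})), α = 1, v = (e0 − iβ·K·e1)·(1 − 2·f⁺·f⁻) with f⁺ = −iF, f⁻ = EK^{-1}, and let u ∈ Q be the Drinfeld element u = Σ_{(Φ),(R)} S(Φ''·b·S(Φ'''))·S(R'')·α·R'·Φ', where Φ = Σ Φ'⊗Φ''⊗Φ''' and R = Σ R'⊗R''. Then the balancing element g = b·S(α)·v^{-1}·u satisfies: g = K if β² = −i, and g = K^{-1} if β² = i. In particular g is group-like: Δ(g) = g⊗g. -/

import Mathlib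

open TensorProduct

set_option maxHeartbeats 1000000
set_option synthInstance.maxHeartbeats 400000

noncomputable section

/-- Generators of the restricted quantum group `Q = \bar U_i sl(2)`. -/
inductive QGen : Type
  | E | F | K | Kinv
deriving DecidableEq

/-- The free algebra on the generators. -/
abbrev FA : Type := FreeAlgebra ℂ QGen

def ιE : FA := FreeAlgebra.ι ℂ QGen.E
def ιF : FA := FreeAlgebra.ι ℂ QGen.F
def ιK : FA := FreeAlgebra.ι ℂ QGen.K
def ιKi : FA := FreeAlgebra.ι ℂ QGen.Kinv

/-- Defining relations of `\bar U_i sl(2)` (at `q = i`, i.e. `p = 2`). -/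
inductive QRel : FA → FA → Prop
  | KKi : QRel (ιK * ιKi) 1
  | KiK : QRel (ιKi * ιK) 1
  | KEKi : QRel (ιK * ιE * ιKi) (-ιE)
  | KFKi : QRel (ιK * ιF * ιKi) (-ιF)
  | EF : QRel (ιE * ιF - ιF * ιE) ((2 * Complex.I)⁻¹ • (ιK - ιKi))
  | Esq : QRel (ιE ^ 2) 0
  | Fsq : QRel (ιF ^ 2) 0
  | K4 : QRel (ιK ^ 4) 1

/-- The restricted quantum group `\bar U_i sl(2)`: the quotient of the free algebra
by the two-sided ideal generated by the defining relations. -/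
abbrev Q : Type := RingQuot QRel

def gE : Q := RingQuot.mkAlgHom ℂ QRel ιE
def gF : Q := RingQuot.mkAlgHom ℂ QRel ιF
def gK : Q := RingQuot.mkAlgHom ℂ QRel ιK
def gKi : Q := RingQuot.mkAlgHom ℂ QRel ιKi

section Gadgets

variable (k : Type) [Field k] (A : Type) [Ring A] [Algebra k A]

abbrev TP2 : Type := A ⊗[k] A
abbrev TP3 : Type := A ⊗[k] (A ⊗[k] A)
abbrev TP4 : Type := A ⊗[k] (A ⊗[k] (A ⊗[k] A))

/-- Multiplication `a ⊗ b ↦ a * b`. -/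
def mulA : TP2 k A →ₗ[k] A := LinearMap.mul' k A

/-- Tensor flip `a ⊗ b ↦ b ⊗ a`. -/
def flipA : TP2 k A →ₗ[k] TP2 k A := (TensorProduct.comm k A A).toLinearMap

/-- `a ↦ a ⊗ 1`. -/
def lTen : A →ₗ[k] TP2 k A := (TensorProduct.mk k A A).flip 1

/-- `a ↦ 1 ⊗ a`. -/
def rTen : A →ₗ[k] TP2 k A := TensorProduct.mk k A A 1

/-- `a ⊗ b ↦ a ⊗ b ⊗ 1`. -/
def emb12 : TP2 k A →ₗ[k] TP3 k A := TensorProduct.map LinearMap.id (lTen k A)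

/-- `a ⊗ b ↦ a ⊗ 1 ⊗ b`. -/
def emb13 : TP2 k A →ₗ[k] TP3 k A := TensorProduct.map LinearMap.id (rTen k A)

/-- `a ⊗ b ↦ 1 ⊗ a ⊗ b`. -/
def emb23 : TP2 k A →ₗ[k] TP3 k A := TensorProduct.mk k A (TP2 k A) 1

/-- `a ⊗ b ⊗ c ↦ a ⊗ c ⊗ b`. -/
def perm132 : TP3 k A →ₗ[k] TP3 k A := TensorProduct.map LinearMap.id (flipA k A)

/-- `a ⊗ b ⊗ c ↦ b ⊗ c ⊗ a`. -/
def perm231 : TP3 k A →ₗ[k] TP3 k A :=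
  (TensorProduct.assoc k A A A).toLinearMap ∘ₗ (TensorProduct.comm k A (TP2 k A)).toLinearMap

/-- `a ⊗ b ⊗ c ↦ c ⊗ a ⊗ b`. -/
def perm312 : TP3 k A →ₗ[k] TP3 k A :=
  (TensorProduct.comm k (TP2 k A) A).toLinearMap ∘ₗ (TensorProduct.assoc k A A A).symm.toLinearMap

/-- `a ⊗ b ⊗ c ↦ b ⊗ a ⊗ c`. -/
def perm213 : TP3 k A →ₗ[k] TP3 k A :=
  (TensorProduct.assoc k A A A).toLinearMap ∘ₗ
    (TensorProduct.map (flipA k A) LinearMap.id) ∘ₗ (TensorProduct.assoc k A A A).symm.toLinearMap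

variable {k A}

/-- `(Δ ⊗ id)` on two tensor factors, landing in the triple tensor product. -/
def copL (D : A →ₐ[k] TP2 k A) : TP2 k A →ₗ[k] TP3 k A :=
  (TensorProduct.assoc k A A A).toLinearMap ∘ₗ TensorProduct.map D.toLinearMap LinearMap.id

/-- `(id ⊗ Δ)` on two tensor factors. -/
def copR (D : A →ₐ[k] TP2 k A) : TP2 k A →ₗ[k] TP3 k A :=
  TensorProduct.map LinearMap.id D.toLinearMap

/-- `(ε ⊗ id) : A ⊗ A → A`. -/
def cuL (ce : A →ₐ[k] k) : TP2 k A →ₗ[k] A :=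
  (TensorProduct.lid k A).toLinearMap ∘ₗ TensorProduct.map ce.toLinearMap LinearMap.id

/-- `(id ⊗ ε) : A ⊗ A → A`. -/
def cuR (ce : A →ₐ[k] k) : TP2 k A →ₗ[k] A :=
  (TensorProduct.rid k A).toLinearMap ∘ₗ TensorProduct.map LinearMap.id ce.toLinearMap

/-- `(id ⊗ ε ⊗ id) : A ⊗ A ⊗ A → A ⊗ A`. -/
def cuMid (ce : A →ₐ[k] k) : TP3 k A →ₗ[k] TP2 k A :=
  TensorProduct.map LinearMap.id (cuL ce)

/-- `(Δ ⊗ id ⊗ id)`. -/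
def cop4_1 (D : A →ₐ[k] TP2 k A) : TP3 k A →ₗ[k] TP4 k A :=
  (TensorProduct.assoc k A A (TP2 k A)).toLinearMap ∘ₗ TensorProduct.map D.toLinearMap LinearMap.id

/-- `(id ⊗ Δ ⊗ id)`. -/
def cop4_2 (D : A →ₐ[k] TP2 k A) : TP3 k A →ₗ[k] TP4 k A :=
  TensorProduct.map LinearMap.id (copL D)

/-- `(id ⊗ id ⊗ Δ)`. -/
def cop4_3 (D : A →ₐ[k] TP2 k A) : TP3 k A →ₗ[k] TP4 k A :=
  TensorProduct.map LinearMap.id (copR D)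

/-- `a ⊗ b ⊗ c ↦ a ⊗ b ⊗ c ⊗ 1`, i.e. `Φ ↦ Φ ⊗ 1`. -/
def pad4 : TP3 k A →ₗ[k] TP4 k A :=
  TensorProduct.map LinearMap.id (TensorProduct.map LinearMap.id (lTen k A))

/-- `a ⊗ b ⊗ c ↦ f(a) * g(b) * h(c)`. -/
def tmap3 (f g h : A →ₗ[k] A) : TP3 k A →ₗ[k] A :=
  mulA k A ∘ₗ TensorProduct.map f (mulA k A ∘ₗ TensorProduct.map g h)

/-- `a ⊗ b ↦ S(a) * b`, used in the antipode axiom `m ∘ (S ⊗ id) ∘ Δ = 1·ε`. -/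
def antipL (s : A →ₗ[k] A) : TP2 k A →ₗ[k] A := mulA k A ∘ₗ TensorProduct.map s LinearMap.id

/-- `a ⊗ b ↦ a * S(b)`. -/
def antipR (s : A →ₗ[k] A) : TP2 k A →ₗ[k] A := mulA k A ∘ₗ TensorProduct.map LinearMap.id s

end Gadgets

/-- Central idempotent `e₀ = (1 + K²)/2`. -/
def e0 : Q := (2:ℂ)⁻¹ • (1 + gK ^ 2)

/-- Central idempotent `e₁ = (1 − K²)/2`. -/
def e1 : Q := (2:ℂ)⁻¹ • (1 - gK ^ 2)

/-- `f⁺ = −i F`. -/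
def fp : Q := (-Complex.I) • gF

/-- `f⁻ = E K⁻¹`. -/
def fm : Q := gE * gKi

/-- The Casimir element `C = FE − (i/4)(K − K⁻¹)`. -/
def Cas : Q := gF * gE - (Complex.I / 4) • (gK - gKi)

def t2 (a b : Q) : TP2 ℂ Q := a ⊗ₜ[ℂ] b

def t3 (a b c : Q) : TP3 ℂ Q := a ⊗ₜ[ℂ] (b ⊗ₜ[ℂ] c)

def eEF : Q := gE * gF
def eEK : Q := gE * gK
def eFK : Q := gF * gK
def eEFK : Q := gE * gF * gK

/-- `Φ^{010}` component of the coassociator. -/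
def Phi010 : TP3 ℂ Q :=
  t3 1 1 1 - (1 + Complex.I) • t3 gE gK gF + (1 - Complex.I) • t3 eFK gK eEK
    + (2:ℂ) • t3 eEFK 1 eEFK

/-- `Φ^{101}` component of the coassociator. -/
def Phi101 : TP3 ℂ Q :=
  (Complex.I - 1) • t3 1 gF eEK + t3 1 gK 1 + (2:ℂ) • t3 1 eEF eEFK
    - (1 + Complex.I) • t3 1 eEK gF - (1 + Complex.I) • t3 gE eFK 1
    + (2 * Complex.I) • t3 gE eEFK gF + (1 - Complex.I) • t3 eFK gE 1
    - (2 * Complex.I) • t3 eFK eEFK eEK - (2:ℂ) • t3 eEFK eEF 1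

/-- `Φ^{111}` component of the coassociator. -/
def Phi111 (β : ℂ) : TP3 ℂ Q :=
  (Complex.I * β ^ 2) • (
    (1 + Complex.I) • t3 1 gF eEK - t3 1 gK 1 - (2:ℂ) • t3 1 eEF 1
      - (2 * Complex.I) • t3 1 eEF eEFK + (1 + Complex.I) • t3 1 eEK gF
      - (1 + Complex.I) • t3 gE 1 gF + (1 + Complex.I) • t3 gE eFK 1
      + (2 * Complex.I) • t3 gE eFK eEFK + (2:ℂ) • t3 gE eEFK gF
      - (1 + Complex.I) • t3 eFK 1 eEK + (1 + Complex.I) • t3 eFK gE 1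
      + (2 * Complex.I) • t3 eFK gE eEFK + (2:ℂ) • t3 eFK eEFK eEK
      + (2 * Complex.I) • t3 eEFK gF eEK + (2 * Complex.I) • t3 eEFK gK eEFK
      - (2 * Complex.I) • t3 eEFK eEF 1 + (2 * Complex.I) • t3 eEFK eEK gF
      + (4:ℂ) • t3 eEFK eEF eEFK)

/-- The coassociator `Φ` of the quasi-Hopf algebra structure on `Q`. -/
def Phi (β : ℂ) : TP3 ℂ Q :=
  t3 e0 e0 e0 + t3 e1 e0 e0 + Phi010 * t3 e0 e1 e0 + t3 e0 e0 e1
    + t3 e1 e1 e0 + Phi101 * t3 e1 e0 e1 + t3 e0 e1 e1 + Phi111 β * t3 e1 e1 e1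

def R00 : TP2 ℂ Q :=
  (2:ℂ)⁻¹ • ((t2 1 1 + t2 1 gK + t2 gK 1 - t2 gK gK) * (t2 1 1 + (2 * Complex.I) • t2 gE gF))

def R01 : TP2 ℂ Q :=
  (2:ℂ)⁻¹ • ((t2 1 1 - Complex.I • t2 1 gK + t2 gK 1 + Complex.I • t2 gK gK) *
    (t2 1 1 + (1 - Complex.I) • t2 eFK eEK - (1 - Complex.I) • t2 gE gF
      + (1 + Complex.I) • t2 eEFK 1 + (2 * Complex.I) • t2 eEFK eEFK))

def R10 : TP2 ℂ Q :=
  (2:ℂ)⁻¹ • ((t2 1 1 + t2 1 gK - Complex.I • t2 gK 1 + Complex.I • t2 gK gK) *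
    (t2 1 gK + (1 - Complex.I) • t2 eFK gE + (1 - Complex.I) • t2 gE eFK
      - (1 - Complex.I) • t2 1 eEF - (2 * Complex.I) • t2 eEFK eEF))

def R11 (β : ℂ) : TP2 ℂ Q :=
  (β / 2) • ((t2 1 1 - Complex.I • t2 1 gK - Complex.I • t2 gK 1 + t2 gK gK) *
    ((-Complex.I) • t2 gK 1 + (2 * Complex.I) • t2 eEK gF + (1 - Complex.I) • t2 gK eEFK
      - (1 + Complex.I) • t2 eEF 1 - (2 * Complex.I) • t2 eEF eEFK))

/-- The universal R-matrix `R` of the quasi-triangular quasi-Hopf structure on `Q`. -/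
def Rmat (β : ℂ) : TP2 ℂ Q :=
  R00 * t2 e0 e0 + R01 * t2 e0 e1 + R10 * t2 e1 e0 + R11 β * t2 e1 e1

/-- The standard R-matrix `R_st` of the quotient `Q/(K²-1)`. -/
def Rst : TP2 ℂ Q :=
  (2:ℂ)⁻¹ • ∑ m ∈ Finset.range 2, ∑ n ∈ Finset.range 2,
    ((-1:ℂ) ^ (m * n)) • (t2 (gK ^ m) (gK ^ n) * (t2 1 1 + (2 * Complex.I) • t2 gE gF))

/-- The monodromy matrix `M = R₂₁ · R`. -/
def Mmat (β : ℂ) : TP2 ℂ Q := flipA ℂ Q (Rmat β) * Rmat β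

/-- The ribbon element `v = (e₀ − iβ K e₁)(1 − 2 f⁺ f⁻)`. -/
def vRib (β : ℂ) : Q := (e0 - (Complex.I * β) • (gK * e1)) * (1 - (2:ℂ) • (fp * fm))

/-- The coevaluation element `β = e₀ − 2iβ² C e₁`. -/
def bbEl (β : ℂ) : Q := e0 - (2 * Complex.I * β ^ 2) • (Cas * e1)

/-- `b ⊗ c ↦ S(b · bb · S(c))`, inner part of the Drinfeld element. -/
def uInner (S : Q →ₗ[ℂ] Q) (bb : Q) : TP2 ℂ Q →ₗ[ℂ] Q :=
  S ∘ₗ mulA ℂ Q ∘ₗ TensorProduct.map (LinearMap.mulRight ℂ bb) S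

/-- `Φ' ⊗ Φ'' ⊗ Φ''' ↦ S(Φ'' · bb · S(Φ''')) ⊗ Φ'`. -/
def uMap1 (S : Q →ₗ[ℂ] Q) (bb : Q) : TP3 ℂ Q →ₗ[ℂ] TP2 ℂ Q :=
  TensorProduct.map (uInner S bb) LinearMap.id ∘ₗ (TensorProduct.comm ℂ Q (TP2 ℂ Q)).toLinearMap

/-- `R' ⊗ R'' ↦ S(R'') · al · R'`. -/
def uMap2 (S : Q →ₗ[ℂ] Q) (al : Q) : TP2 ℂ Q →ₗ[ℂ] Q :=
  mulA ℂ Q ∘ₗ TensorProduct.map (LinearMap.mulRight ℂ al ∘ₗ S) LinearMap.id ∘ₗ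
    (TensorProduct.comm ℂ Q Q).toLinearMap

/-- `(x ⊗ a) ⊗ (R' ⊗ R'') ↦ x · (S(R'') · al · R') · a`. -/
def uBig (S : Q →ₗ[ℂ] Q) (al : Q) : TP2 ℂ Q ⊗[ℂ] TP2 ℂ Q →ₗ[ℂ] Q :=
  mulA ℂ Q ∘ₗ TensorProduct.map LinearMap.id (mulA ℂ Q ∘ₗ (TensorProduct.comm ℂ Q Q).toLinearMap)
    ∘ₗ (TensorProduct.assoc ℂ Q Q Q).toLinearMap ∘ₗ TensorProduct.map LinearMap.id (uMap2 S al)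

/-- The Drinfeld element `u = Σ S(Φ''·b·S(Φ'''))·S(R'')·α·R'·Φ'` (with `α = 1`). -/
def uDrin (β : ℂ) (S : Q →ₗ[ℂ] Q) : Q :=
  uBig S 1 (uMap1 S (bbEl β) (Phi β) ⊗ₜ[ℂ] Rmat β)

/-- The balancing element `g = b · S(α) · v⁻¹ · u` (with `α = 1`). -/
def balG (β : ℂ) (S : Q →ₗ[ℂ] Q) : Q :=
  bbEl β * S 1 * Ring.inverse (vRib β) * uDrin β S

/-- The cointegral `c = (β²/i)·E·F·(1 + K + K² + K³)`. -/
def cInt (β : ℂ) : Q := (β ^ 2 / Complex.I) • (gE * gF * (1 + gK + gK ^ 2 + gK ^ 3))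

/-- The q-trace of a one-dimensional representation, with balancing element `K⁻¹`. -/
def qTr1 (ρ : Q →ₐ[ℂ] ℂ) : Q →ₗ[ℂ] ℂ := ρ.toLinearMap ∘ₗ LinearMap.mulLeft ℂ gK

/-- The q-trace of a two-dimensional (matrix) representation, with balancing element `K⁻¹`. -/
def qTrM (ρ : Q →ₐ[ℂ] Matrix (Fin 2) (Fin 2) ℂ) : Q →ₗ[ℂ] ℂ :=
  Matrix.traceLinearMap (Fin 2) ℂ ℂ ∘ₗ ρ.toLinearMap ∘ₗ LinearMap.mulLeft ℂ gK

/-- The Drinfeld mapping `φ ↦ (φ ⊗ id)(M)`. -/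
def drinfeldImg (β : ℂ) (φ : Q →ₗ[ℂ] ℂ) : Q :=
  (TensorProduct.lid ℂ Q) (TensorProduct.map φ LinearMap.id (Mmat β))

set_option linter.unusedSimpArgs false
set_option linter.unusedVariables false

/-! ### Sign rules, stated with the negation of `RingQuot` -/

lemma q_neg_mul (a b : Q) : -a * b = -(a * b) := neg_mul a b
lemma q_mul_neg (a b : Q) : a * -b = -(a * b) := mul_neg a b
lemma q_neg_smul (c : ℂ) (a : Q) : (-c) • a = -(c • a) := neg_smul c a
lemma q_smul_neg (c : ℂ) (a : Q) : c • (-a) = -(c • a) := smul_neg c a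
lemma q_neg_neg (a : Q) : - -a = a := neg_neg a
lemma q_neg_zero : -(0 : Q) = 0 := neg_zero
lemma q_zero_sub (a : Q) : 0 - a = -a := zero_sub a
lemma q_map_neg (S : Q →ₗ[ℂ] Q) (a : Q) : S (-a) = -S a := map_neg S a

/-! ### Relations in `Q` -/

lemma rel_KKi : gK * gKi = 1 := by
  simpa [gK, gKi] using RingQuot.mkAlgHom_rel ℂ QRel.KKi

lemma rel_KiK : gKi * gK = 1 := by
  simpa [gK, gKi] using RingQuot.mkAlgHom_rel ℂ QRel.KiK

lemma rel_K4 : gK ^ 4 = 1 := by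
  simpa [gK] using RingQuot.mkAlgHom_rel ℂ QRel.K4

lemma rel_EE : gE * gE = 0 := by
  simpa [gE, pow_two] using RingQuot.mkAlgHom_rel ℂ QRel.Esq

lemma rel_FF : gF * gF = 0 := by
  simpa [gF, pow_two] using RingQuot.mkAlgHom_rel ℂ QRel.Fsq

lemma rel_KE : gK * gE = -(gE * gK) := by
  have h : gK * gE * gKi = -gE := by
    simpa [gK, gE, gKi] using RingQuot.mkAlgHom_rel ℂ QRel.KEKi
  calc gK * gE = gK * gE * (gKi * gK) := by rw [rel_KiK, mul_one]
    _ = (gK * gE * gKi) * gK := by simp only [mul_assoc]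
    _ = _ := by rw [h, q_neg_mul]

lemma rel_KF : gK * gF = -(gF * gK) := by
  have h : gK * gF * gKi = -gF := by
    simpa [gK, gF, gKi] using RingQuot.mkAlgHom_rel ℂ QRel.KFKi
  calc gK * gF = gK * gF * (gKi * gK) := by rw [rel_KiK, mul_one]
    _ = (gK * gF * gKi) * gK := by simp only [mul_assoc]
    _ = _ := by rw [h, q_neg_mul]

lemma inv_two_I : (2 * Complex.I)⁻¹ = -(Complex.I / 2) := by
  rw [mul_inv, Complex.inv_I]; ring

lemma rel_FE : gF * gE = gE * gF + (Complex.I / 2) • (gK - gKi) := by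
  have h : gE * gF - gF * gE = (2 * Complex.I)⁻¹ • (gK - gKi) := by
    have h0 := RingQuot.mkAlgHom_rel ℂ QRel.EF
    rw [map_smul, map_sub, map_sub, map_mul, map_mul] at h0
    exact h0
  rw [inv_two_I, q_neg_smul] at h
  rw [eq_comm, ← sub_eq_zero, ← sub_eq_zero.mpr h]
  abel

lemma rel_Ki : gKi = gK * (gK * gK) := by
  calc gKi = gKi * gK ^ 4 := by rw [rel_K4, mul_one]
    _ = (gKi * gK) * (gK * (gK * gK)) := by simp only [pow_succ, pow_zero, one_mul, mul_assoc]
    _ = _ := by rw [rel_KiK, one_mul]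

/-! ### The relations acting on an arbitrary element -/

lemma act_EE (x : Q) : gE * (gE * x) = 0 := by rw [← mul_assoc, rel_EE, zero_mul]
lemma act_FF (x : Q) : gF * (gF * x) = 0 := by rw [← mul_assoc, rel_FF, zero_mul]
lemma act_KE (x : Q) : gK * (gE * x) = -(gE * (gK * x)) := by
  rw [← mul_assoc, rel_KE, q_neg_mul, mul_assoc]
lemma act_KF (x : Q) : gK * (gF * x) = -(gF * (gK * x)) := by
  rw [← mul_assoc, rel_KF, q_neg_mul, mul_assoc]
lemma act_Ki (x : Q) : gKi * x = gK * (gK * (gK * x)) := by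
  rw [rel_Ki]; simp only [mul_assoc]
lemma act_FE (x : Q) :
    gF * (gE * x) = gE * (gF * x) + (Complex.I / 2) • (gK * x - gK * (gK * (gK * x))) := by
  rw [← mul_assoc, rel_FE, add_mul, smul_mul_assoc, sub_mul, act_Ki, mul_assoc]
lemma act_K4 (x : Q) : gK * (gK * (gK * (gK * x))) = x := by
  rw [← act_Ki, ← mul_assoc, rel_KiK, one_mul]

/-! ### The central idempotents -/

lemma K_e0 : gK * (gK * e0) = e0 := by
  have h : gK * (gK * (gK * gK)) = 1 := by simpa using act_K4 1
  simp only [e0, mul_smul_comm, pow_two, mul_add, mul_one, h]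
  rw [add_comm]

lemma K_e1 : gK * (gK * e1) = -e1 := by
  have h : gK * (gK * (gK * gK)) = 1 := by simpa using act_K4 1
  simp only [e1, mul_smul_comm, pow_two, mul_sub, mul_one, h]
  module

lemma e_add : e0 + e1 = 1 := by
  simp only [e0, e1]; module

lemma e0_eq : e0 = 1 - e1 := by rw [← e_add]; abel

lemma e1_e1 : e1 * e1 = e1 := by
  have : e1 * e1 = (2:ℂ)⁻¹ • (e1 - gK * (gK * e1)) := by
    conv_lhs => enter [1]; rw [e1]
    simp only [smul_mul_assoc, sub_mul, one_mul, pow_two, mul_assoc]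
  rw [this, K_e1]; module

lemma e0_e1 : e0 * e1 = 0 := by rw [e0_eq, sub_mul, one_mul, e1_e1, sub_self]
lemma e1_e0 : e1 * e0 = 0 := by rw [e0_eq, mul_sub, mul_one, e1_e1, sub_self]
lemma e0_e0 : e0 * e0 = e0 := by
  conv_lhs => enter [1]; rw [e0_eq]
  rw [sub_mul, one_mul, e1_e0, sub_zero]

lemma Ksq_comm (x : Q) : (gK * gK) * x = x * (gK * gK) := by
  obtain ⟨x, rfl⟩ := RingQuot.mkAlgHom_surjective ℂ QRel x
  induction x using FreeAlgebra.induction with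
  | grade0 r => simp only [AlgHom.commutes]; exact (Algebra.commutes r _).symm
  | grade1 g =>
    cases g
    · change gK * gK * gE = gE * (gK * gK)
      simp only [mul_assoc, rel_KE, q_mul_neg, act_KE, q_neg_neg]
    · change gK * gK * gF = gF * (gK * gK)
      simp only [mul_assoc, rel_KF, q_mul_neg, act_KF, q_neg_neg]
    · change gK * gK * gK = gK * (gK * gK)
      simp only [mul_assoc]
    · change gK * gK * gKi = gKi * (gK * gK)
      simp only [mul_assoc, rel_Ki]
  | mul a b ha hb => rw [map_mul, ← mul_assoc, ha, mul_assoc, hb, mul_assoc]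
  | add a b ha hb => rw [map_add, mul_add, add_mul, ha, hb]

lemma e1_comm (x : Q) : e1 * x = x * e1 := by
  simp only [e1, pow_two, smul_mul_assoc, mul_smul_comm, sub_mul, mul_sub, Ksq_comm x, one_mul,
    mul_one]

lemma e0_comm (x : Q) : e0 * x = x * e0 := by
  rw [e0_eq, sub_mul, mul_sub, e1_comm, one_mul, mul_one]

lemma e1_mid (x : Q) : e1 * (x * e1) = x * e1 := by rw [e1_comm, mul_assoc, e1_e1]
lemma e0_mid (x : Q) : e0 * (x * e0) = x * e0 := by rw [e0_comm, mul_assoc, e0_e0]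
lemma e1_mid0 (x : Q) : e1 * (x * e0) = 0 := by rw [e1_comm, mul_assoc, e0_e1, mul_zero]
lemma e0_mid1 (x : Q) : e0 * (x * e1) = 0 := by rw [e0_comm, mul_assoc, e1_e0, mul_zero]

/-- Products with `e₁` of elements in right-associated form. -/
lemma e1_E (x : Q) : e1 * (gE * x) = gE * (e1 * x) := by
  rw [← mul_assoc, e1_comm, mul_assoc]
lemma e1_F (x : Q) : e1 * (gF * x) = gF * (e1 * x) := by
  rw [← mul_assoc, e1_comm, mul_assoc]
lemma e1_K (x : Q) : e1 * (gK * x) = gK * (e1 * x) := by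
  rw [← mul_assoc, e1_comm, mul_assoc]
lemma e0_E (x : Q) : e0 * (gE * x) = gE * (e0 * x) := by
  rw [← mul_assoc, e0_comm, mul_assoc]
lemma e0_F (x : Q) : e0 * (gF * x) = gF * (e0 * x) := by
  rw [← mul_assoc, e0_comm, mul_assoc]
lemma e0_K (x : Q) : e0 * (gK * x) = gK * (e0 * x) := by
  rw [← mul_assoc, e0_comm, mul_assoc]

/-! ### The inverse of the ribbon element -/

/-- The inverse of the ribbon element. -/
def wRib (β : ℂ) : Q :=
  (1 + (2:ℂ) • (fp * fm)) * e0 - (Complex.I * β⁻¹) • (gK * ((1 - (2:ℂ) • (fp * fm)) * e1))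

lemma ext_e {x y : Q} (h0 : x * e0 = y * e0) (h1 : x * e1 = y * e1) : x = y := by
  rw [← mul_one x, ← mul_one y, ← e_add, mul_add, mul_add, h0, h1]

lemma vw_both (β : ℂ) (hb : β ≠ 0) : vRib β * wRib β = 1 ∧ wRib β * vRib β = 1 := by
  have hI := Complex.I_sq
  constructor <;> apply ext_e
  all_goals
    simp only [vRib, wRib, fp, fm, mul_assoc, sub_mul, add_mul, mul_sub, mul_add, one_mul, q_neg_mul,
      mul_one, smul_mul_assoc, mul_smul_comm, e0_e0, e0_e1, e1_e0, e1_e1, e1_E, e1_F, e1_K, e0_E,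
      e0_F, e0_K, q_neg_smul,
      act_Ki, act_FE, act_KE, act_KF, act_EE, act_FF, K_e0, K_e1, q_mul_neg, q_smul_neg,
      q_neg_neg, smul_zero, mul_zero, sub_zero, add_zero, zero_add, sub_self, q_neg_zero, q_zero_sub]
    match_scalars <;> grind

lemma inv_vRib (β : ℂ) (hb : β ≠ 0) : Ring.inverse (vRib β) = wRib β :=
  Ring.inverse_unit (⟨vRib β, wRib β, (vw_both β hb).1, (vw_both β hb).2⟩ : Qˣ)

/-! ### The Drinfeld element -/

lemma uMap2_t2 (S : Q →ₗ[ℂ] Q) (a b : Q) : uMap2 S 1 (t2 a b) = S b * a := by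
  simp [uMap2, t2, mulA]

lemma t2_mul (a b c d : Q) : t2 a b * t2 c d = t2 (a * c) (b * d) :=
  Algebra.TensorProduct.tmul_mul_tmul a c b d

lemma t3_mul (a b c x y z : Q) : t3 a b c * t3 x y z = t3 (a * x) (b * y) (c * z) := by
  simp only [t3, Algebra.TensorProduct.tmul_mul_tmul]

lemma uMap2_mul (S : Q →ₗ[ℂ] Q) (hSmul : ∀ a b : Q, S (a * b) = S b * S a) (X : TP2 ℂ Q)
    (x y : Q) (hy : ∀ z, y * z = z * y) (hSy : S y = y) :
    uMap2 S 1 (X * t2 x y) = uMap2 S 1 X * (x * y) := by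
  induction X using TensorProduct.induction_on with
  | zero => simp
  | add X Y hX hY => rw [add_mul, map_add, map_add, add_mul, hX, hY]
  | tmul a b =>
    rw [show a ⊗ₜ[ℂ] b = t2 a b from rfl, t2_mul, uMap2_t2, uMap2_t2, hSmul, hSy, mul_assoc, hy]
    simp only [mul_assoc]

/-- The linear map applied to the coassociator, once `r = m (S ⊗ id) (flip R)` is known. -/
def Tm (S : Q →ₗ[ℂ] Q) (bb r : Q) : TP3 ℂ Q →ₗ[ℂ] Q :=
  mulA ℂ Q ∘ₗ TensorProduct.map LinearMap.id (LinearMap.mulLeft ℂ r) ∘ₗ uMap1 S bb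

lemma Tm_t3 (S : Q →ₗ[ℂ] Q) (hSmul : ∀ a b : Q, S (a * b) = S b * S a) (bb r a b c : Q) :
    Tm S bb r (t3 a b c) = S (S c) * (S bb * (S b * (r * a))) := by
  simp [Tm, t3, mulA, uMap1, uInner, hSmul, mul_assoc]

lemma Tm_mul (S : Q →ₗ[ℂ] Q) (hSmul : ∀ a b : Q, S (a * b) = S b * S a) (bb r : Q)
    (X : TP3 ℂ Q) (x y z : Q) (hy : ∀ w, y * w = w * y)
    (hz : ∀ w, z * w = w * z) (hSy : S y = y) (hSz : S z = z) :
    Tm S bb r (X * t3 x y z) = Tm S bb r X * (x * (y * z)) := by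
  induction X using TensorProduct.induction_on with
  | zero => simp
  | add X Y hX hY => rw [add_mul, map_add, map_add, add_mul, hX, hY]
  | tmul a B =>
    induction B using TensorProduct.induction_on with
    | zero => simp
    | add X Y hX hY => rw [tmul_add, add_mul, map_add, map_add, add_mul, hX, hY]
    | tmul b c =>
      rw [show a ⊗ₜ[ℂ] (b ⊗ₜ[ℂ] c) = t3 a b c from rfl, t3_mul]
      simp only [Tm_t3 S hSmul, hSmul, hSy, hSz]
      rw [← hz (S (S c)), mul_assoc y, hy (S b * _), mul_assoc z, hz]
      simp only [mul_assoc]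

lemma uDrin_eq (β : ℂ) (S : Q →ₗ[ℂ] Q) :
    uDrin β S = Tm S (bbEl β) (uMap2 S 1 (Rmat β)) (Phi β) := by
  simp only [uDrin, Tm, LinearMap.comp_apply]
  generalize uMap1 S (bbEl β) (Phi β) = X
  induction X using TensorProduct.induction_on with
  | zero => simp
  | add X Y hX hY => rw [add_tmul, map_add, map_add, map_add, hX, hY]
  | tmul a b => simp [uBig, mulA]

lemma S_Ki (S : Q →ₗ[ℂ] Q) (hS1 : S 1 = 1) (hSmul : ∀ a b : Q, S (a * b) = S b * S a)
    (hSK : S gK = gKi) : S gKi = gK := by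
  have h : S gKi * gKi = 1 := by
    conv_lhs => enter [2]; rw [← hSK]
    rw [← hSmul, rel_KKi, hS1]
  calc S gKi = S gKi * gKi * gK := by rw [mul_assoc, rel_KiK, mul_one]
    _ = gK := by rw [h, one_mul]

lemma S_e1 (S : Q →ₗ[ℂ] Q) (hS1 : S 1 = 1) (hSmul : ∀ a b : Q, S (a * b) = S b * S a)
    (hSK : S gK = gKi) : S e1 = e1 := by
  have h : gKi * gKi = gK * gK := by
    rw [act_Ki, rel_Ki, act_K4]
  simp only [e1, map_smul, map_sub, hS1, pow_two, hSmul, hSK, h]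

lemma S_e0 (S : Q →ₗ[ℂ] Q) (hS1 : S 1 = 1) (hSmul : ∀ a b : Q, S (a * b) = S b * S a)
    (hSK : S gK = gKi) : S e0 = e0 := by
  rw [e0_eq, map_sub, hS1, S_e1 S hS1 hSmul hSK]


/-- The `e₀`-part of `m (S ⊗ id) (flip R)`. -/
lemma r_e0 (β : ℂ) (S : Q →ₗ[ℂ] Q) (hS1 : S 1 = 1) (hSmul : ∀ a b : Q, S (a * b) = S b * S a)
    (hSF : S gF = -(gK * gF)) (hSK : S gK = gKi) :
    uMap2 S 1 (Rmat β) * e0 = gK * e0 + (2 * Complex.I) • (gE * (gF * e0)) := by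
  have s1 := S_e1 S hS1 hSmul hSK
  have s0 := S_e0 S hS1 hSmul hSK
  have hI := Complex.I_sq
  rw [Rmat]
  simp only [map_add, uMap2_mul S hSmul _ _ _ e0_comm s0,
    uMap2_mul S hSmul _ _ _ e1_comm s1, add_mul, mul_assoc, e0_e0, e0_e1, e1_e0, e1_e1,
    mul_zero, add_zero]
  simp only [R00, t2_mul, map_smul, map_add, map_sub, uMap2_t2, hS1, hSK, hSF, hSmul,
    mul_assoc, sub_mul, add_mul, mul_sub, mul_add, one_mul, q_neg_mul,
    mul_one, smul_mul_assoc, mul_smul_comm, act_Ki, act_FE, act_KE, act_KF, act_EE, act_FF, K_e0,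
    q_mul_neg, q_smul_neg, q_neg_neg, smul_zero, mul_zero, sub_zero, add_zero, zero_add, sub_self,
    q_neg_zero, q_zero_sub]
  match_scalars <;> grind

/-- The `e₁`-part of `m (S ⊗ id) (flip R)`. -/
lemma r_e1 (β : ℂ) (S : Q →ₗ[ℂ] Q) (hS1 : S 1 = 1) (hSmul : ∀ a b : Q, S (a * b) = S b * S a)
    (hSE : S gE = -(gE * gKi)) (hSF : S gF = -(gK * gF)) (hSK : S gK = gKi) :
    uMap2 S 1 (Rmat β) * e1 = -(β • (gK * e1)) := by
  have s1 := S_e1 S hS1 hSmul hSK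
  have s0 := S_e0 S hS1 hSmul hSK
  have hI := Complex.I_sq
  rw [Rmat]
  simp only [map_add, uMap2_mul S hSmul _ _ _ e0_comm s0,
    uMap2_mul S hSmul _ _ _ e1_comm s1, add_mul, mul_assoc, e0_e0, e0_e1, e1_e0, e1_e1,
    mul_zero, zero_mul, zero_add]
  simp only [R11, eEF, eEK, eEFK, t2_mul, map_smul, map_add, map_sub, uMap2_t2, hS1, hSK, hSE,
    hSF, hSmul,
    mul_assoc, sub_mul, add_mul, mul_sub, mul_add, one_mul, q_neg_mul,
    mul_one, smul_mul_assoc, mul_smul_comm, act_Ki, act_FE, act_KE, act_KF, act_EE, act_FF, K_e1,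
    q_mul_neg, q_smul_neg, q_neg_neg, smul_zero, mul_zero, sub_zero, add_zero, zero_add, sub_self,
    q_neg_zero, q_zero_sub]
  match_scalars <;> grind

/-- The `e₀`-part of the Drinfeld element. -/
lemma u_e0 (β : ℂ) (S : Q →ₗ[ℂ] Q) (hS1 : S 1 = 1) (hSmul : ∀ a b : Q, S (a * b) = S b * S a)
    (hSF : S gF = -(gK * gF)) (hSK : S gK = gKi) :
    uDrin β S * e0 = gK * e0 + (2 * Complex.I) • (gE * (gF * e0)) := by
  have s1 := S_e1 S hS1 hSmul hSK
  have s0 := S_e0 S hS1 hSmul hSK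
  have hr := r_e0 β S hS1 hSmul hSF hSK
  have hb : S (bbEl β) = e0 - (2 * Complex.I * β ^ 2) • (e1 * S Cas) := by
    simp only [bbEl, map_sub, map_smul, hSmul, s0, s1]
  rw [uDrin_eq, Phi]
  have hT (x y z : Q) (hy : ∀ w, y * w = w * y) (hz : ∀ w, z * w = w * z)
      (hSy : S y = y) (hSz : S z = z) (r : Q) : Tm S (bbEl β) r (t3 x y z)
        = Tm S (bbEl β) r (t3 1 1 1) * (x * (y * z)) := by
    rw [← Tm_mul S hSmul _ _ _ _ _ _ hy hz hSy hSz]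
    simp [t3]
  generalize uMap2 S 1 (Rmat β) = r at hr ⊢
  simp only [map_add, Tm_mul S hSmul _ _ _ _ _ _ e1_comm e0_comm s1 s0,
    Tm_mul S hSmul _ _ _ _ _ _ e0_comm e1_comm s0 s1,
    Tm_mul S hSmul _ _ _ _ _ _ e1_comm e1_comm s1 s1,
    hT _ _ _ e1_comm e0_comm s1 s0, hT _ _ _ e0_comm e1_comm s0 s1,
    hT _ _ _ e1_comm e1_comm s1 s1, hT _ _ _ e0_comm e0_comm s0 s0,
    add_mul, mul_assoc, e0_e0, e0_e1,
    e1_e0, e1_e1, mul_zero, add_zero, zero_mul]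
  simp only [Tm_t3 S hSmul, hS1, one_mul, mul_one, mul_assoc, hr, hb]
  simp only [mul_add, sub_mul, mul_smul_comm, smul_mul_assoc, mul_assoc]
  simp only [← hr, e0_E, e0_F, e0_K, e0_e0]
  simp only [hr, e1_comm, mul_assoc, e0_e1, mul_zero, smul_zero, sub_zero]

/-- The `e₁`-part of the Drinfeld element. -/
lemma u_e1 (β : ℂ) (S : Q →ₗ[ℂ] Q) (hβ : β ^ 4 = -1) (hS1 : S 1 = 1)
    (hSmul : ∀ a b : Q, S (a * b) = S b * S a)
    (hSE : S gE = -(gE * gKi)) (hSF : S gF = -(gK * gF)) (hSK : S gK = gKi) :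
    uDrin β S * e1 = -(β • (gK * e1)) := by
  have s1 := S_e1 S hS1 hSmul hSK
  have s0 := S_e0 S hS1 hSmul hSK
  have si := S_Ki S hS1 hSmul hSK
  have hr := r_e1 β S hS1 hSmul hSE hSF hSK
  have hI := Complex.I_sq
  rw [uDrin_eq, Phi]
  generalize uMap2 S 1 (Rmat β) = r at hr ⊢
  have hra (a : Q) : r * (a * e1) = -(β • (gK * (a * e1))) := by
    rw [← e1_comm, ← mul_assoc, hr, q_neg_mul, smul_mul_assoc, mul_assoc]
  have hb (x : Q) : S (bbEl β) * (x * e1) = -((2 * Complex.I * β ^ 2) • (S Cas * (x * e1))) := by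
    simp only [bbEl, map_sub, map_smul, hSmul, s0, s1, sub_mul, smul_mul_assoc, e0_mid1, q_zero_sub,
      mul_assoc]
    rw [← mul_assoc (S Cas), e1_mid]
  have hT (a b c : Q) : Tm S (bbEl β) r (t3 a b c) * e1 =
      (2 * Complex.I * β ^ 3) • (S (S c) * (S Cas * (S b * (gK * (a * e1))))) := by
    rw [Tm_t3 S hSmul]
    simp only [mul_assoc, hra]
    have := hb (S b * (gK * a))
    simp only [mul_assoc] at this
    simp only [q_mul_neg, mul_smul_comm, this, q_smul_neg, q_neg_neg, smul_smul]
    ring_nf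
  have hT2 (x y z : Q) (hy : ∀ w, y * w = w * y) (hz : ∀ w, z * w = w * z)
      (hSy : S y = y) (hSz : S z = z) : Tm S (bbEl β) r (t3 x y z)
        = Tm S (bbEl β) r (t3 1 1 1) * (x * (y * z)) := by
    rw [← Tm_mul S hSmul _ _ _ _ _ _ hy hz hSy hSz]
    simp [t3]
  simp only [map_add, Tm_mul S hSmul _ _ _ _ _ _ e1_comm e0_comm s1 s0,
    Tm_mul S hSmul _ _ _ _ _ _ e0_comm e1_comm s0 s1,
    Tm_mul S hSmul _ _ _ _ _ _ e1_comm e1_comm s1 s1,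
    hT2 _ _ _ e1_comm e0_comm s1 s0, hT2 _ _ _ e0_comm e1_comm s0 s1,
    hT2 _ _ _ e1_comm e1_comm s1 s1, hT2 _ _ _ e0_comm e0_comm s0 s0,
    add_mul, mul_assoc, e0_e0, e0_e1,
    e1_e0, e1_e1, mul_zero, zero_mul, zero_add]
  simp only [Phi111, map_add, map_sub, map_smul, add_mul, sub_mul, smul_mul_assoc, hT, Cas, eEF,
    eEK, eFK, eEFK, q_map_neg, hS1, hSK, hSE, hSF, si, hSmul,
    mul_assoc, mul_sub, mul_add, one_mul, q_neg_mul,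
    mul_one, mul_smul_comm, act_Ki, act_FE, act_KE, act_KF, act_EE, act_FF, K_e1, e1_e1, e0_e1,
    q_mul_neg, q_smul_neg, q_neg_neg, smul_zero, mul_zero, sub_zero, add_zero, zero_add, sub_self,
    q_neg_zero, q_zero_sub]
  match_scalars <;> grind

/-- the balancing element `g = b·S(α)·v⁻¹·u` (with `α = 1` and `u`
the Drinfeld element) equals `K` if `β² = −i` and `K⁻¹` if `β² = i`; in particular
it is group-like. -/
theorem statement18 (β : ℂ) (hβ : β ^ 4 = -1)
    (Δ : Q →ₐ[ℂ] TP2 ℂ Q)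
    (hΔE : Δ gE = (1:Q) ⊗ₜ[ℂ] gE + gE ⊗ₜ[ℂ] gK)
    (hΔF : Δ gF = gKi ⊗ₜ[ℂ] gF + gF ⊗ₜ[ℂ] (1:Q))
    (hΔK : Δ gK = gK ⊗ₜ[ℂ] gK)
    (S : Q →ₗ[ℂ] Q) (hS1 : S 1 = 1) (hSmul : ∀ a b : Q, S (a * b) = S b * S a)
    (hSE : S gE = -(gE * gKi)) (hSF : S gF = -(gK * gF)) (hSK : S gK = gKi) :
    (β ^ 2 = -Complex.I → balG β S = gK) ∧
    (β ^ 2 = Complex.I → balG β S = gKi) ∧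
    Δ (balG β S) = balG β S ⊗ₜ[ℂ] balG β S := by
  have hb : β ≠ 0 := by
    rintro rfl
    norm_num at hβ
  have hI := Complex.I_sq
  have h0 := u_e0 β S hS1 hSmul hSF hSK
  have h1 := u_e1 β S hβ hS1 hSmul hSE hSF hSK
  have g0 : balG β S * e0 = gK * e0 := by
    rw [balG, hS1, mul_one, inv_vRib β hb, mul_assoc, h0]
    simp only [bbEl, wRib, Cas, fp, fm, mul_assoc, sub_mul, add_mul, mul_sub, mul_add, one_mul,
      q_neg_mul,
      mul_one, smul_mul_assoc, mul_smul_comm, e0_e0, e0_e1, e1_e0, e1_e1, e1_E, e1_F, e1_K, e0_E,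
      e0_F, e0_K, q_neg_smul,
      act_Ki, act_FE, act_KE, act_KF, act_EE, act_FF, K_e0, K_e1, q_mul_neg, q_smul_neg,
      q_neg_neg, smul_zero, mul_zero, sub_zero, add_zero, zero_add, sub_self, q_neg_zero, q_zero_sub]
    match_scalars <;> grind
  have g1 : balG β S * e1 = (Complex.I * β ^ 2) • (gK * e1) := by
    rw [balG, hS1, mul_one, inv_vRib β hb, mul_assoc, h1]
    simp only [bbEl, wRib, Cas, fp, fm, mul_assoc, sub_mul, add_mul, mul_sub, mul_add, one_mul,
      q_neg_mul,
      mul_one, smul_mul_assoc, mul_smul_comm, e0_e0, e0_e1, e1_e0, e1_e1, e1_E, e1_F, e1_K, e0_E,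
      e0_F, e0_K, q_neg_smul,
      act_Ki, act_FE, act_KE, act_KF, act_EE, act_FF, K_e0, K_e1, q_mul_neg, q_smul_neg,
      q_neg_neg, smul_zero, mul_zero, sub_zero, add_zero, zero_add, sub_self, q_neg_zero, q_zero_sub]
    match_scalars <;> grind
  have hA : β ^ 2 = -Complex.I → balG β S = gK := by
    intro h
    apply ext_e g0
    rw [g1, show Complex.I * β ^ 2 = 1 by rw [h]; linear_combination -hI, one_smul]
  have hB : β ^ 2 = Complex.I → balG β S = gKi := by
    intro h
    apply ext_e
    · rw [g0, act_Ki, K_e0]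
    · rw [g1, act_Ki, K_e1, show Complex.I * β ^ 2 = -1 by rw [h]; linear_combination hI,
        q_mul_neg, q_neg_smul, one_smul]
  refine ⟨hA, hB, ?_⟩
  have hc : (β ^ 2 - Complex.I) * (β ^ 2 + Complex.I) = 0 := by
    linear_combination hβ - hI
  rcases mul_eq_zero.mp hc with h | h
  · rw [hB (sub_eq_zero.mp h), rel_Ki]
    simp only [map_mul, hΔK, Algebra.TensorProduct.tmul_mul_tmul]
  · rw [hA (eq_neg_of_add_eq_zero_left h), hΔK]
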